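/- For even n and any skew-symmetric n × n complex matrices x₁, …, x_{2n−2}, the standard polynomial of degree 2n − 2 vanishes: ∑_{σ ∈ Sym(2n−2)} sgn(σ) x_{σ(1)} ⋯ x_{σ(2n−2)} = 0. -/

import Mathlib

open Matrix

/-- The standard polynomial `[[x₁,…,x_k]] = ∑_{σ ∈ Sym(k)} sgn(σ) x_{σ(1)} ⋯ x_{σ(k)}`
in an associative ring. -/
noncomputable def standardPolynomial {R : Type*} [Ring R] {k : ℕ} (x : Fin k → R) : R :=
  ∑ σ : Equiv.Perm (Fin k), (Equiv.Perm.sign σ : ℤ) • (List.ofFn fun i => x (σ i)).prod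

/-!
Let `e₁, …, e_k` be anticommuting variables and `M = ∑ₚ eₚ xₚ`, so that
`M ^ k = e₁ ⋯ e_k [[x₁,…,x_k]]`. The entries of `A = M ^ 2` commute, and moving a factor `M` once
around the trace of `M ^ (2 * r)` changes its sign, so `tr (A ^ r) = 0` for all `r > 0`. Hence `A`
has characteristic polynomial `X ^ n`, and `A ^ (n - 1) = adj (-A)`.

To see that `adj A` vanishes, adjoin further odd variables `θ₁, …, θₙ` with `∂ᵢ = ∂/∂θᵢ`: the minors
of `A` of size `n - 1` are coefficients of the products of `n - 1` of the `aᵢ`, `a = A θ`.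
Write `n = 2m + 2` and put `φ = M θ` (even), `T = ∑ᵢ θᵢ φᵢ` and `u = ∑ᵢ φᵢ²`; the skew-symmetry of
`M` gives `∂ᵢ u = 2 aᵢ`, `∂ᵢ T = 2 φᵢ` and `∑ᵢ φᵢ aᵢ = 0`. As `θₖ T u ^ m` has degree
`2m + 3 > n` in the `θ`s, it vanishes. The operator `∑ᵢ φᵢ ∂ᵢ` kills whatever all `θₖ` kill,
because `M` has zero diagonal; applied to `T u ^ m` it gives `2 u ^ (m + 1) = 0`. Differentiating
this once yields `aᵢ u ^ m = 0`. From then on, multiplying by one `a` and differentiating trades a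
factor `u` for two factors `a`, until every product of `2m + 1 = n - 1` of the `a`s is zero.
-/

section CommutativeMatrices

open Polynomial

variable {ι R : Type*} [Fintype ι] [DecidableEq ι] [CommRing R]

theorem derivative_det (M : Matrix ι ι R[X]) :
    derivative M.det = trace (adjugate M * M.map derivative) := by
  calc derivative M.det
      = ∑ j, (M.updateCol j fun i => derivative (M i j)).det := by
        simp only [det_apply, derivative_sum, derivative_smul, derivative_prod_finset,
          Finset.smul_sum]
        rw [Finset.sum_comm]
        refine Finset.sum_congr rfl fun j _ => Finset.sum_congr rfl fun σ _ => ?_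
        rw [← Finset.mul_prod_erase _ _ (Finset.mem_univ j), updateCol_self, mul_comm]
        congr 2
        exact Finset.prod_congr rfl fun i hi => (updateCol_ne (Finset.ne_of_mem_erase hi)).symm
    _ = ∑ j, (adjugate M * M.map derivative) j j :=
        Finset.sum_congr rfl fun j _ => by
          rw [← cramer_apply, cramer_eq_adjugate_mulVec]; rfl

theorem map_derivative_charmatrix (A : Matrix ι ι R) : (charmatrix A).map derivative = 1 := by
  ext i j : 1
  rcases eq_or_ne i j with rfl | hij
  · simp
  · simp [hij]

theorem derivative_charpoly (A : Matrix ι ι R) :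
    derivative A.charpoly = trace (adjugate (charmatrix A)) := by
  rw [Matrix.charpoly, derivative_det, map_derivative_charmatrix, mul_one]

theorem adjugate_charmatrix_mul (A : Matrix ι ι R) :
    adjugate (charmatrix A) * C.mapMatrix A =
      (X : R[X]) • adjugate (charmatrix A) - A.charpoly • 1 := by
  have h : adjugate (charmatrix A) * (scalar ι X - C.mapMatrix A) = A.charpoly • 1 :=
    adjugate_mul _
  rw [← h, mul_sub, scalar_apply, ← smul_one_eq_diagonal, mul_smul_comm, mul_one, sub_sub_cancel]

theorem trace_adjugate_charmatrix_mul_aeval {A : Matrix ι ι R}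
    (hA : ∀ k, 0 < k → trace (A ^ k) = 0) (q : R[X]) :
    trace (adjugate (charmatrix A) * C.mapMatrix (A * aeval A q)) =
      q * trace (adjugate (charmatrix A) * C.mapMatrix A) := by
  have trace_pow (k : ℕ) : trace (adjugate (charmatrix A) * C.mapMatrix (A ^ (k + 1))) =
      X ^ k * trace (adjugate (charmatrix A) * C.mapMatrix A) := by
    induction k with
    | zero => simp
    | succ k ih =>
      have htr : trace (C.mapMatrix (A ^ (k + 1))) = 0 := by
        rw [RingHom.mapMatrix_apply, ← AddMonoidHom.map_trace, hA _ k.succ_pos, map_zero]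
      rw [pow_succ' A, map_mul, ← mul_assoc, adjugate_charmatrix_mul, sub_mul, smul_mul_assoc,
        smul_mul_assoc, one_mul, trace_sub, trace_smul, trace_smul, htr, smul_zero, sub_zero, ih,
        ← adjugate_charmatrix_mul, smul_eq_mul, pow_succ', mul_assoc]
  induction q using Polynomial.induction_on' with
  | add p q hp hq => rw [map_add, mul_add, map_add, mul_add, trace_add, hp, hq, add_mul]
  | monomial k a =>
    have h : C.mapMatrix (A * aeval A (monomial k a)) = C a • C.mapMatrix (A ^ (k + 1)) := by
      rw [aeval_monomial, ← Algebra.smul_def, mul_smul_comm, ← pow_succ']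
      ext i j : 1
      simp
    rw [h, mul_smul_comm, trace_smul, trace_pow, smul_eq_mul, ← mul_assoc, C_mul_X_pow_eq_monomial]

theorem X_mul_derivative_charpoly_of_trace_pow_eq_zero {A : Matrix ι ι R}
    (hA : ∀ k, 0 < k → trace (A ^ k) = 0) :
    X * derivative A.charpoly = A.charpoly * (Fintype.card ι : R[X]) := by
  -- Cayley–Hamilton: take `q` to be the characteristic polynomial in the previous lemma.
  have htr : trace (adjugate (charmatrix A) * C.mapMatrix A) = 0 := by
    refine (charpoly_monic A).mul_right_eq_zero_iff.1 ?_
    rw [← trace_adjugate_charmatrix_mul_aeval hA, aeval_self_charpoly, mul_zero, map_zero,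
      mul_zero, trace_zero]
  rwa [adjugate_charmatrix_mul, trace_sub, trace_smul, trace_smul, trace_one,
    ← derivative_charpoly, sub_eq_zero] at htr

theorem charpoly_eq_X_pow_of_trace_pow_eq_zero [IsAddTorsionFree R] {A : Matrix ι ι R}
    (hA : ∀ k, 0 < k → trace (A ^ k) = 0) : A.charpoly = X ^ Fintype.card ι := by
  nontriviality R
  have euler (k : ℕ) : k • A.charpoly.coeff k = Fintype.card ι • A.charpoly.coeff k := by
    have h := congrArg (coeff · k) (X_mul_derivative_charpoly_of_trace_pow_eq_zero hA)
    cases k with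
    | zero => simpa [mul_comm] using h
    | succ k => simpa [coeff_X_mul, coeff_derivative, mul_comm] using h
  ext k
  rw [coeff_X_pow]
  split_ifs with hk
  · rw [hk, ← charpoly_natDegree_eq_dim A, (charpoly_monic A).coeff_natDegree]
  · refine (smul_eq_zero.1 (?_ : ((k : ℤ) - Fintype.card ι) • A.charpoly.coeff k = 0)).resolve_left
      (sub_ne_zero.2 (mod_cast hk))
    rw [sub_smul, natCast_zsmul, natCast_zsmul, euler, sub_self]

theorem adjugate_charmatrix_of_charpoly_eq_X_pow {A : Matrix ι ι R}
    (hA : A.charpoly = X ^ Fintype.card ι) :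
    adjugate (charmatrix A) = ∑ k ∈ Finset.range (Fintype.card ι),
      scalar ι X ^ k * C.mapMatrix A ^ (Fintype.card ι - 1 - k) := by
  have hcomm : Commute (scalar ι X) (C.mapMatrix A) := scalar_commute X (Commute.all X) _
  have hnil : A ^ Fintype.card ι = 0 := by
    rw [← aeval_X_pow (R := R), ← hA, aeval_self_charpoly]
  have hgeom := hcomm.geom_sum₂_mul (Fintype.card ι)
  rw [← map_pow C.mapMatrix, hnil, map_zero, sub_zero] at hgeom
  refine (isRegular_of_isLeftRegular_det (charpoly_monic A).isRegular.left).right ?_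
  change adjugate (charmatrix A) * charmatrix A = _ * charmatrix A
  rw [adjugate_mul, ← Matrix.charpoly, hA, charmatrix, hgeom, ← map_pow, scalar_apply,
    ← smul_one_eq_diagonal]

theorem pow_eq_adjugate_neg_of_trace_pow_eq_zero [IsAddTorsionFree R] {A : Matrix ι ι R}
    (hA : ∀ k, 0 < k → trace (A ^ k) = 0) :
    A ^ (Fintype.card ι - 1) = adjugate (-A) := by
  cases isEmpty_or_nonempty ι
  · exact Subsingleton.elim _ _
  have heval (B : Matrix ι ι R) : (evalRingHom 0).mapMatrix (C.mapMatrix B) = B := by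
    ext; simp
  have hX : (evalRingHom (0 : R)).mapMatrix (scalar ι X) = 0 := by
    ext i j
    simp [diagonal_apply, apply_ite (eval (0 : R))]
  have h := congrArg (evalRingHom (0 : R)).mapMatrix
    (adjugate_charmatrix_of_charpoly_eq_X_pow (charpoly_eq_X_pow_of_trace_pow_eq_zero hA))
  rw [RingHom.map_adjugate, charmatrix, map_sub, hX, heval, zero_sub, map_sum,
    Finset.sum_eq_single_of_mem 0 (Finset.mem_range.2 Fintype.card_pos)] at h
  · rw [h, pow_zero, one_mul, map_pow, heval, Nat.sub_zero]
  · intro k _ hk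
    rw [map_mul, map_pow, hX, zero_pow hk, zero_mul]

end CommutativeMatrices

section AnticommutingEntries

variable {ι R : Type*} [Fintype ι] [DecidableEq ι] [Ring R] {M : Matrix ι ι R}

theorem mul_pow_apply_of_anticommute (hM : ∀ i j i' j', M i j * M i' j' = -(M i' j' * M i j))
    (k : ℕ) (i j i' j' : ι) : M i j * (M ^ k) i' j' = (-1) ^ k * ((M ^ k) i' j' * M i j) := by
  induction k generalizing i' j' with
  | zero => simp [one_apply]
  | succ k ih =>
    simp only [pow_succ M, mul_apply, Finset.mul_sum, Finset.sum_mul]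
    refine Finset.sum_congr rfl fun l _ => ?_
    rw [← mul_assoc, ih, mul_assoc ((M ^ k) i' l), hM l j', pow_succ, mul_assoc, mul_assoc]
    simp

theorem trace_pow_two_mul_of_anticommute [IsAddTorsionFree R]
    (hM : ∀ i j i' j', M i j * M i' j' = -(M i' j' * M i j)) {k : ℕ} (hk : 0 < k) :
    trace (M ^ (2 * k)) = 0 := by
  obtain ⟨m, hm⟩ : ∃ m, 2 * k = m + 1 := ⟨2 * k - 1, by omega⟩
  have hodd : Odd m := by grind
  refine self_eq_neg.1 ?_
  calc trace (M ^ (2 * k)) = ∑ i, ∑ j, (M ^ m) i j * M j i := by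
        rw [hm, pow_succ, trace]; rfl
    _ = ∑ j, ∑ i, -(M j i * (M ^ m) i j) := by
        rw [Finset.sum_comm]
        refine Finset.sum_congr rfl fun i _ => Finset.sum_congr rfl fun j _ => ?_
        rw [mul_pow_apply_of_anticommute hM, hodd.neg_one_pow, neg_one_mul, neg_neg]
    _ = -trace (M ^ (2 * k)) := by
        simp only [Finset.sum_neg_distrib]
        rw [hm, pow_succ', trace]; rfl

end AnticommutingEntries

theorem alternatingMap_apply_row {ι Z N : Type*} [Fintype ι] [DecidableEq ι] [CommRing Z]
    [AddCommGroup N] [Module Z N] (f : (ι → Z) [⋀^ι]→ₗ[Z] N) (B : Matrix ι ι Z) :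
    f B.row = B.det • f fun i => Pi.single i 1 := by
  suffices h : f = (LinearMap.toSpanSingleton Z N (f fun i => Pi.single i 1)).compAlternatingMap
      detRowAlternating from congrArg (· B.row) h
  refine (Pi.basisFun Z ι).ext_alternating fun p hp => ?_
  obtain ⟨σ, rfl⟩ : ∃ σ : Equiv.Perm ι, σ = p :=
    ⟨Equiv.ofBijective p (Finite.injective_iff_bijective.1 hp), rfl⟩
  have hbasis : (fun i => Pi.basisFun Z ι (σ i)) = (fun i => Pi.single i 1) ∘ σ := by
    simp [Function.comp_def]
  have hdet : detRowAlternating (fun i => Pi.single i 1 : ι → ι → Z) = 1 := by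
    rw [← det_one (R := Z) (n := ι), ← diagonal_one]
    exact congrArg det (ext fun i j => by simp [Pi.single_apply, diagonal_apply, eq_comm])
  rw [hbasis, AlternatingMap.map_perm, AlternatingMap.map_perm,
    LinearMap.compAlternatingMap_apply, hdet, LinearMap.toSpanSingleton_apply, one_smul]

section AnticommutingProducts

variable {Z S : Type*} [CommRing Z] [Ring S] [Algebra Z S] [IsAddTorsionFree S] {n : ℕ}
  {θ : Fin n → S}

theorem linearCombination_mul_self_of_anticommute (hθ : ∀ i j, θ i * θ j = -(θ j * θ i))
    (v : Fin n → Z) : Fintype.linearCombination Z θ v * Fintype.linearCombination Z θ v = 0 := by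
  refine self_eq_neg.1 ?_
  rw [Fintype.linearCombination_apply, Finset.sum_mul_sum, ← Finset.sum_neg_distrib,
    Finset.sum_comm]
  refine Finset.sum_congr rfl fun i _ => ?_
  rw [← Finset.sum_neg_distrib]
  refine Finset.sum_congr rfl fun j _ => ?_
  rw [smul_mul_smul_comm, smul_mul_smul_comm, hθ, smul_neg, mul_comm]

theorem prod_ofFn_linearCombination_row (hθ : ∀ i j, θ i * θ j = -(θ j * θ i))
    (B : Matrix (Fin n) (Fin n) Z) :
    (List.ofFn fun i => Fintype.linearCombination Z θ (B.row i)).prod =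
      B.det • (List.ofFn θ).prod := by
  let f : (Fin n → Z) [⋀^Fin n]→ₗ[Z] S :=
    (ExteriorAlgebra.lift Z ⟨Fintype.linearCombination Z θ,
      linearCombination_mul_self_of_anticommute hθ⟩).toLinearMap.compAlternatingMap
      (ExteriorAlgebra.ιMulti Z n)
  have hf (v : Fin n → Fin n → Z) :
      f v = (List.ofFn fun i => Fintype.linearCombination Z θ (v i)).prod := by
    simp [f, ExteriorAlgebra.ιMulti_apply, map_list_prod, List.map_ofFn, Function.comp_def]
  rw [← hf, alternatingMap_apply_row, hf]
  simp

theorem adjugate_smul_prod_eq_zero (hθ : ∀ i j, θ i * θ j = -(θ j * θ i))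
    {A : Matrix (Fin n) (Fin n) Z}
    (hA : ∀ L : List (Fin n), L.length + 1 = n →
      (L.map fun i => Fintype.linearCombination Z θ (A i)).prod = 0) (i j : Fin n) :
    adjugate A i j • (List.ofFn θ).prod = 0 := by
  obtain ⟨m, rfl⟩ : ∃ m, n = m + 1 := ⟨n - 1, by have := i.pos; omega⟩
  let B := (A.updateRow j (Pi.single i 1)).submatrix (Equiv.swap 0 j) id
  have hB : B.det = Equiv.Perm.sign (Equiv.swap 0 j) * adjugate A i j := by
    rw [adjugate_apply, det_permute]
  have hBsucc (l : Fin m) : B.row l.succ = A (Equiv.swap 0 j l.succ) := by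
    refine updateRow_ne fun h => l.succ_ne_zero ?_
    rwa [Equiv.swap_apply_eq_iff, Equiv.swap_apply_right] at h
  have hdet : B.det • (List.ofFn θ).prod = 0 := by
    have htail := hA (List.ofFn fun l : Fin m => Equiv.swap 0 j l.succ) (by simp)
    rw [List.map_ofFn, Function.comp_def] at htail
    rw [← prod_ofFn_linearCombination_row hθ, List.ofFn_succ, List.prod_cons]
    simp only [hBsucc, htail, mul_zero]
  rw [hB, mul_smul] at hdet
  have hunit : IsUnit ((Equiv.Perm.sign (Equiv.swap 0 j) : ℤ) : Z) :=
    (Units.isUnit _).map (Int.castRingHom Z)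
  exact hunit.smul_eq_zero.1 hdet

end AnticommutingProducts

theorem pow_apply_mul_prod_eq_zero {S : Type*} [Ring S] [IsAddTorsionFree S] {n k : ℕ}
    {M : Matrix (Fin n) (Fin n) S} {θ : Fin n → S}
    (hM : ∀ i j i' j', M i j * M i' j' = -(M i' j' * M i j))
    (hcenter : ∀ i j, (M ^ 2) i j ∈ Subring.center S) (hθ : ∀ i j, θ i * θ j = -(θ j * θ i))
    (hprod : ∀ L : List (Fin n), L.length + 1 = n → (L.map ((M ^ 2) *ᵥ θ)).prod = 0)
    (hk : 2 * n ≤ k + 2) (i j : Fin n) : (M ^ k) i j * (List.ofFn θ).prod = 0 := by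
  let A : Matrix (Fin n) (Fin n) (Subring.center S) := of fun i j => ⟨(M ^ 2) i j, hcenter i j⟩
  have : IsAddTorsionFree (Subring.center S) :=
    Subtype.val_injective.isAddTorsionFree (Subring.center S).subtype.toAddMonoidHom
  have hA (m : ℕ) : (Subring.center S).subtype.mapMatrix (A ^ m) = M ^ (2 * m) := by
    rw [map_pow, pow_mul]
    rfl
  have htrace (m : ℕ) (hm : 0 < m) : trace (A ^ m) = 0 := by
    refine Subtype.val_injective ?_
    rw [← Subring.coe_subtype, AddMonoidHom.map_trace, ← RingHom.mapMatrix_apply, hA,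
      trace_pow_two_mul_of_anticommute hM hm, map_zero]
  have hA_prod (L : List (Fin n)) (hL : L.length + 1 = n) :
      (L.map fun i => Fintype.linearCombination (Subring.center S) θ (A i)).prod = 0 :=
    hprod L hL
  have hpow (i j : Fin n) : (M ^ (2 * (n - 1))) i j * (List.ofFn θ).prod = 0 := by
    have hadj := pow_eq_adjugate_neg_of_trace_pow_eq_zero htrace
    rw [Fintype.card_fin, ← neg_one_smul (Subring.center S) A, adjugate_smul] at hadj
    rw [← hA, hadj]
    exact (mul_smul _ _ _).trans
      ((congrArg _ (adjugate_smul_prod_eq_zero hθ hA_prod i j)).trans (smul_zero _))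
  obtain ⟨m, rfl⟩ : ∃ m, k = m + 2 * (n - 1) := ⟨k - 2 * (n - 1), by omega⟩
  rw [pow_add, mul_apply, Finset.sum_mul]
  exact Finset.sum_eq_zero fun l _ => by rw [mul_assoc, hpow, mul_zero]

section StandardPolynomial

open ExteriorAlgebra
open scoped TensorProduct

variable {K V : Type*} [CommRing K] [AddCommGroup V] [Module K V]

theorem prod_ofFn_tmul {R A B : Type*} [CommSemiring R] [Semiring A] [Algebra R A] [Semiring B]
    [Algebra R B] {k : ℕ} (a : Fin k → A) (b : Fin k → B) :
    (List.ofFn fun i => a i ⊗ₜ[R] b i).prod = (List.ofFn a).prod ⊗ₜ (List.ofFn b).prod := by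
  induction k with
  | zero => simp [Algebra.TensorProduct.one_def]
  | succ k ih => simp [List.ofFn_succ, ih]

theorem sum_ι_tmul_pow {A : Type*} [Ring A] [Algebra K A] {k : ℕ} (v : Fin k → V) (a : Fin k → A) :
    (∑ p, ι K (v p) ⊗ₜ[K] a p) ^ k = ιMulti K k v ⊗ₜ[K] standardPolynomial a := by
  have expand : (∑ p, ι K (v p) ⊗ₜ[K] a p) ^ k =
      ∑ f : Fin k → Fin k, ιMulti K k (v ∘ f) ⊗ₜ[K] (List.ofFn (a ∘ f)).prod := by
    rw [← MultilinearMap.mkPiAlgebraFin_apply_const (R := K), MultilinearMap.map_sum]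
    refine Finset.sum_congr rfl fun f _ => ?_
    rw [MultilinearMap.mkPiAlgebraFin_apply, ιMulti_apply]
    exact prod_ofFn_tmul _ _
  rw [expand, standardPolynomial, TensorProduct.tmul_sum]
  symm
  refine Finset.sum_of_injOn (fun σ : Equiv.Perm (Fin k) => (σ : Fin k → Fin k))
    DFunLike.coe_injective.injOn (by simp) (fun f _ hf => ?_) fun σ _ => ?_
  · rw [ιMulti_eq_zero_of_not_inj, TensorProduct.zero_tmul]
    intro hinj
    exact hf ⟨Equiv.ofBijective f (Finite.injective_iff_bijective.1 hinj.of_comp), by simp, rfl⟩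
  · rw [AlternatingMap.map_perm, TensorProduct.tmul_smul, Units.smul_def, TensorProduct.smul_tmul',
      Function.comp_def]

theorem matrix_sum_ι_smul_pow {ι' : Type*} [Fintype ι'] [DecidableEq ι'] {k : ℕ}
    (v : Fin k → V) (a : Fin k → Matrix ι' ι' K) :
    (∑ p, ι K (v p) • (a p).map (algebraMap K (ExteriorAlgebra K V))) ^ k =
      ιMulti K k v • (standardPolynomial a).map (algebraMap K (ExteriorAlgebra K V)) := by
  simp only [← matrixEquivTensor_apply_symm, ← map_sum, ← map_pow, sum_ι_tmul_pow]

end StandardPolynomial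

section ExteriorAlgebra

open ExteriorAlgebra Module

variable {K W : Type*} [CommRing K] [AddCommGroup W] [Module K W]

theorem ι_mul_ι_eq_neg (v w : W) : ι K v * ι K w = -(ι K w * ι K v) :=
  eq_neg_of_add_eq_zero_left (ι_add_mul_swap v w)

theorem ι_mul_ι_mem_center (v w : W) : ι K v * ι K w ∈ Subring.center (ExteriorAlgebra K W) := by
  refine Subring.mem_center_iff.2 fun y => ?_
  induction y using ExteriorAlgebra.induction with
  | algebraMap r => exact Algebra.commutes r _
  | ι z =>
    rw [← mul_assoc, ι_mul_ι_eq_neg z v, neg_mul, mul_assoc, ι_mul_ι_eq_neg z w, mul_neg, neg_neg,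
      mul_assoc]
  | mul a b ha hb => rw [mul_assoc, hb, ← mul_assoc, ha, mul_assoc]
  | add a b ha hb => rw [add_mul, ha, hb, mul_add]

theorem exists_mul_ι_eq_ι_mul (y : ExteriorAlgebra K W) (v : W) : ∃ z, y * ι K v = ι K v * z := by
  induction y using ExteriorAlgebra.induction with
  | algebraMap r => exact ⟨_, Algebra.commutes r _⟩
  | ι w => exact ⟨-ι K w, by rw [ι_mul_ι_eq_neg, mul_neg]⟩
  | mul a b ha hb =>
    obtain ⟨⟨a', ha⟩, b', hb⟩ := ha, hb
    exact ⟨a' * b', by rw [mul_assoc, hb, ← mul_assoc, ha, mul_assoc]⟩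
  | add a b ha hb =>
    obtain ⟨⟨a', ha⟩, b', hb⟩ := ha, hb
    exact ⟨a' + b', by rw [add_mul, ha, hb, mul_add]⟩

theorem ι_mul_mem_span_range_ι_mul_top {ι' : Type*} (v : ι' → W) (i : ι')
    (y : ExteriorAlgebra K W) :
    ι K (v i) * y ∈ Submodule.span K (Set.range fun i => ι K (v i)) * ⊤ :=
  Submodule.mul_mem_mul (Submodule.subset_span ⟨i, rfl⟩) trivial

theorem top_mul_span_range_ι_le {ι' : Type*} (v : ι' → W) :
    ⊤ * Submodule.span K (Set.range fun i => ι K (v i)) ≤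
      Submodule.span K (Set.range fun i => ι K (v i)) * ⊤ := by
  rw [← Submodule.span_univ, Submodule.span_mul_span, Submodule.span_univ, Submodule.span_le]
  rintro _ ⟨y, -, _, ⟨i, rfl⟩, rfl⟩
  obtain ⟨z, hz⟩ := exists_mul_ι_eq_ι_mul y (v i)
  simpa only [SetLike.mem_coe, hz] using ι_mul_mem_span_range_ι_mul_top v i z

theorem span_range_ι_pow_eq_bot {ι' : Type*} [Fintype ι'] (v : ι' → W) {k : ℕ}
    (hk : Fintype.card ι' < k) :
    Submodule.span K (Set.range fun i => ι K (v i)) ^ k = ⊥ := by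
  rw [Submodule.span_pow, Submodule.span_eq_bot]
  intro y hy
  obtain ⟨f, rfl⟩ := Set.mem_pow.1 hy
  choose g hg using fun i => (f i).2
  have hinj : ¬ Function.Injective g := fun h =>
    hk.not_ge (by simpa using Fintype.card_le_of_injective g h)
  simp only [← hg]
  rw [← ιMulti_apply (R := K) fun i => v (g i)]
  exact ιMulti_eq_zero_of_not_inj fun h => hinj (Function.Injective.of_comp (f := v) h)

theorem span_range_ι_mul_top_pow_eq_bot {ι' : Type*} [Fintype ι'] (v : ι' → W) {k : ℕ}
    (hk : Fintype.card ι' < k) :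
    (Submodule.span K (Set.range fun i => ι K (v i)) * ⊤) ^ k = ⊥ := by
  set P := Submodule.span K (Set.range fun i => ι K (v i))
  have hpow (s : ℕ) : (P * ⊤) ^ s ≤ P ^ s * ⊤ := by
    induction s with
    | zero => simp
    | succ s ih =>
      calc (P * ⊤) ^ (s + 1) = (P * ⊤) ^ s * P * ⊤ := by rw [pow_succ, mul_assoc]
        _ ≤ P ^ s * ⊤ * P * ⊤ := by gcongr
        _ = P ^ s * (⊤ * P) * ⊤ := by rw [mul_assoc (P ^ s)]
        _ ≤ P ^ s * (P * ⊤) * ⊤ :=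
          mul_le_mul' (mul_le_mul' le_rfl (top_mul_span_range_ι_le v)) le_rfl
        _ ≤ P ^ (s + 1) * ⊤ := by
          rw [pow_succ, mul_assoc, mul_assoc, mul_assoc]
          gcongr
          exact le_top
  rw [eq_bot_iff]
  exact (hpow k).trans (by rw [span_range_ι_pow_eq_bot v hk, Submodule.bot_mul])

theorem eq_zero_of_smul_ιMulti_basis_eq_zero {k : ℕ} (b : Basis (Fin k) K W) {c : K}
    (h : c • ιMulti K k b = 0) : c = 0 := by
  have hdet := congrArg (liftAlternating (Pi.single k b.det)) h
  rwa [map_smul, liftAlternating_apply_ιMulti, Pi.single_eq_same, b.det_self, map_zero,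
    smul_eq_mul, mul_one] at hdet

theorem isAddTorsionFree_exteriorAlgebra {I : Type*} [LinearOrder I] [IsAddTorsionFree K]
    (b : Basis I K W) : IsAddTorsionFree (ExteriorAlgebra K W) :=
  Function.Injective.isAddTorsionFree b.ExteriorAlgebra.repr.toLinearMap.toAddMonoidHom
    b.ExteriorAlgebra.repr.injective

end ExteriorAlgebra

/-- The exterior algebra on `V` and `n` further odd generators `θ`. -/
abbrev ThetaAlgebra (K V : Type*) [CommRing K] [AddCommGroup V] [Module K V] (n : ℕ) : Type _ :=
  ExteriorAlgebra K (V × (Fin n → K))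

namespace ThetaAlgebra

open ExteriorAlgebra

variable {K V : Type*} [CommRing K] [AddCommGroup V] [Module K V] {n : ℕ}

/-- The column vector `θ` of the `n` further odd generators. -/
noncomputable def theta (i : Fin n) : ThetaAlgebra K V n :=
  ι K (0, Pi.single i 1)

variable (K) in
/-- The matrix of odd elements with the given matrix of vectors of `V` as its entries. -/
noncomputable def oddMatrix (X : Matrix (Fin n) (Fin n) V) :
    Matrix (Fin n) (Fin n) (ThetaAlgebra K V n) :=
  X.map fun v => ι K (v, 0)

/-- The odd derivation `∂/∂θᵢ`. -/
noncomputable def thetaDeriv (i : Fin n) : ThetaAlgebra K V n →ₗ[K] ThetaAlgebra K V n :=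
  CliffordAlgebra.contractLeft (LinearMap.proj i ∘ₗ LinearMap.snd K V (Fin n → K))

theorem theta_mul_theta (i j : Fin n) :
    theta (K := K) (V := V) i * theta j = -(theta j * theta i) :=
  ι_mul_ι_eq_neg _ _

theorem oddMatrix_mul_oddMatrix (X : Matrix (Fin n) (Fin n) V) (i j i' j' : Fin n) :
    oddMatrix K X i j * oddMatrix K X i' j' = -(oddMatrix K X i' j' * oddMatrix K X i j) :=
  ι_mul_ι_eq_neg _ _

theorem oddMatrix_apply_swap {X : Matrix (Fin n) (Fin n) V} (hX : Xᵀ = -X) (i j : Fin n) :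
    oddMatrix K X j i = -oddMatrix K X i j := by
  have hij : X j i = -X i j := congrFun₂ hX i j
  rw [oddMatrix, map_apply, map_apply, hij, ← map_neg, Prod.neg_mk, neg_zero]

theorem oddMatrix_sq_mem_center (X : Matrix (Fin n) (Fin n) V) (i j : Fin n) :
    (oddMatrix K X ^ 2) i j ∈ Subring.center (ThetaAlgebra K V n) := by
  rw [sq, mul_apply]
  exact Subring.sum_mem _ fun k _ => ι_mul_ι_mem_center _ _

theorem oddMatrix_mulVec_theta_mem_center (X : Matrix (Fin n) (Fin n) V) (i : Fin n) :
    (oddMatrix K X *ᵥ theta) i ∈ Subring.center (ThetaAlgebra K V n) := by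
  rw [mulVec, dotProduct]
  exact Subring.sum_mem _ fun k _ => ι_mul_ι_mem_center _ _

theorem thetaDeriv_one (i : Fin n) : thetaDeriv i (1 : ThetaAlgebra K V n) = 0 :=
  CliffordAlgebra.contractLeft_one ..

theorem thetaDeriv_theta_mul (i k : Fin n) (y : ThetaAlgebra K V n) :
    thetaDeriv i (theta k * y) = (if i = k then y else 0) - theta k * thetaDeriv i y := by
  refine (CliffordAlgebra.contractLeft_ι_mul _ _ _).trans ?_
  congr 1
  simp [Pi.single_apply]

theorem thetaDeriv_oddMatrix_mul (X : Matrix (Fin n) (Fin n) V) (i j k : Fin n)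
    (y : ThetaAlgebra K V n) :
    thetaDeriv i (oddMatrix K X j k * y) = -(oddMatrix K X j k * thetaDeriv i y) := by
  refine (CliffordAlgebra.contractLeft_ι_mul _ _ _).trans ?_
  rw [LinearMap.comp_apply, LinearMap.snd_apply, map_zero, zero_smul, zero_sub]
  rfl

theorem thetaDeriv_mulVec_theta_mul (X : Matrix (Fin n) (Fin n) V) (i l : Fin n)
    (y : ThetaAlgebra K V n) :
    thetaDeriv i ((oddMatrix K X *ᵥ theta) l * y) =
      (oddMatrix K X *ᵥ theta) l * thetaDeriv i y - oddMatrix K X l i * y := by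
  simp only [mulVec, dotProduct, Finset.sum_mul, mul_assoc, map_sum, thetaDeriv_oddMatrix_mul,
    thetaDeriv_theta_mul]
  simp only [mul_sub, neg_sub, Finset.sum_sub_distrib, mul_ite, mul_zero,
    Finset.sum_ite_eq, Finset.mem_univ, if_true]

variable (K) in
/-- The even element `∑ₗ (∑ₖ Mₗₖ θₖ)²`, where `M` is the odd matrix of `X`. -/
noncomputable def normSq (X : Matrix (Fin n) (Fin n) V) : ThetaAlgebra K V n :=
  (oddMatrix K X *ᵥ theta) ⬝ᵥ (oddMatrix K X *ᵥ theta)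

theorem normSq_mem_center (X : Matrix (Fin n) (Fin n) V) :
    normSq K X ∈ Subring.center (ThetaAlgebra K V n) := by
  rw [normSq, dotProduct]
  exact Subring.sum_mem _ fun i _ => Subring.mul_mem _ (oddMatrix_mulVec_theta_mem_center X i)
    (oddMatrix_mulVec_theta_mem_center X i)

theorem thetaDeriv_normSq_mul {X : Matrix (Fin n) (Fin n) V} (hX : Xᵀ = -X) (i : Fin n)
    (y : ThetaAlgebra K V n) :
    thetaDeriv i (normSq K X * y) =
      2 • ((oddMatrix K X ^ 2 *ᵥ theta) i * y) + normSq K X * thetaDeriv i y := by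
  have hterm (l : Fin n) :
      thetaDeriv i ((oddMatrix K X *ᵥ theta) l * ((oddMatrix K X *ᵥ theta) l * y)) =
        2 • (oddMatrix K X i l * (oddMatrix K X *ᵥ theta) l * y) +
          (oddMatrix K X *ᵥ theta) l * (oddMatrix K X *ᵥ theta) l * thetaDeriv i y := by
    have hcomm := Subring.mem_center_iff.1 (oddMatrix_mulVec_theta_mem_center (K := K) X l)
    rw [thetaDeriv_mulVec_theta_mul, thetaDeriv_mulVec_theta_mul, oddMatrix_apply_swap hX i l,
      mul_sub, ← mul_assoc, ← mul_assoc, ← hcomm (-_)]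
    noncomm_ring
  rw [sq, ← mulVec_mulVec, normSq, dotProduct, Finset.sum_mul, Finset.sum_mul, mulVec, dotProduct,
    Finset.sum_mul, Finset.smul_sum, ← Finset.sum_add_distrib, map_sum]
  exact Finset.sum_congr rfl fun l _ => by rw [mul_assoc, hterm]

theorem thetaDeriv_normSq_pow {X : Matrix (Fin n) (Fin n) V} (hX : Xᵀ = -X) (i : Fin n) (s : ℕ) :
    thetaDeriv i (normSq K X ^ (s + 1)) =
      (2 * (s + 1)) • ((oddMatrix K X ^ 2 *ᵥ theta) i * normSq K X ^ s) := by
  induction s with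
  | zero =>
    have h := thetaDeriv_normSq_mul (K := K) hX i 1
    simpa only [thetaDeriv_one, mul_zero, add_zero, mul_one, zero_add, pow_one, pow_zero] using h
  | succ s ih =>
    have hcomm := Subring.mem_center_iff.1 (normSq_mem_center (K := K) X)
    rw [pow_succ', thetaDeriv_normSq_mul hX, ih, mul_smul_comm, ← mul_assoc, ← hcomm, mul_assoc,
      ← pow_succ', ← add_smul]
    congr 1
    ring

theorem sum_mulVec_theta_mul_thetaDeriv_eq_zero [IsAddTorsionFree (ThetaAlgebra K V n)]
    {X : Matrix (Fin n) (Fin n) V} (hX : Xᵀ = -X) {y : ThetaAlgebra K V n}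
    (hy : ∀ k, theta k * y = 0) :
    ∑ i, (oddMatrix K X *ᵥ theta) i * thetaDeriv i y = 0 := by
  refine Finset.sum_eq_zero fun i _ => ?_
  have hθ (k : Fin n) : theta k * thetaDeriv i y = if i = k then y else 0 := by
    have h := thetaDeriv_theta_mul i k y
    rw [hy, map_zero] at h
    exact (sub_eq_zero.1 h.symm).symm
  have hdiag : oddMatrix K X i i = 0 :=
    self_eq_neg.1 (oddMatrix_apply_swap hX i i)
  simp only [mulVec, dotProduct, Finset.sum_mul, mul_assoc, hθ, mul_ite, mul_zero,
    Finset.sum_ite_eq, Finset.mem_univ, if_true, hdiag, zero_mul]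

theorem mulVec_theta_dotProduct_sq_mulVec_theta_eq_zero [IsAddTorsionFree (ThetaAlgebra K V n)]
    {X : Matrix (Fin n) (Fin n) V} (hX : Xᵀ = -X) :
    (oddMatrix K X *ᵥ theta) ⬝ᵥ (oddMatrix K X ^ 2 *ᵥ theta) = 0 := by
  rw [sq, ← mulVec_mulVec]
  have hcomm (i : Fin n) :=
    Subring.mem_center_iff.1 (oddMatrix_mulVec_theta_mem_center (K := K) X i)
  generalize oddMatrix K X *ᵥ theta = φ at hcomm
  refine self_eq_neg.1 ?_
  simp only [dotProduct, mulVec, Finset.mul_sum, ← Finset.sum_neg_distrib]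
  rw [Finset.sum_comm]
  refine Finset.sum_congr rfl fun i _ => Finset.sum_congr rfl fun j _ => ?_
  rw [oddMatrix_apply_swap hX i j, hcomm i, ← hcomm j, mul_neg, neg_mul, mul_assoc]

theorem theta_mul_dotProduct_mul_normSq_pow_eq_zero (X : Matrix (Fin n) (Fin n) V) {m : ℕ}
    (hm : n ≤ 2 * m + 2) (k : Fin n) :
    theta k * (theta ⬝ᵥ (oddMatrix K X *ᵥ theta) * normSq K X ^ m) = 0 := by
  set P := Submodule.span K (Set.range fun i : Fin n => ι K ((0 : V), (Pi.single i 1 : Fin n → K)))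
  have hθ (i : Fin n) : theta i ∈ P * ⊤ := by
    rw [theta, ← mul_one (ι K _)]
    exact ι_mul_mem_span_range_ι_mul_top (K := K) _ i 1
  have hφ (i : Fin n) : (oddMatrix K X *ᵥ theta) i ∈ P * ⊤ := by
    rw [mulVec, dotProduct]
    refine Submodule.sum_mem _ fun j _ => ?_
    rw [theta, oddMatrix, map_apply, ι_mul_ι_eq_neg]
    exact Submodule.neg_mem _ (ι_mul_mem_span_range_ι_mul_top (K := K) _ j _)
  have hdot {f g : Fin n → ThetaAlgebra K V n} (hf : ∀ i, f i ∈ P * ⊤) (hg : ∀ i, g i ∈ P * ⊤) :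
      f ⬝ᵥ g ∈ (P * ⊤) ^ 2 := by
    rw [sq]
    exact Submodule.sum_mem _ fun i _ => Submodule.mul_mem_mul (hf i) (hg i)
  have hmem : theta k * (theta ⬝ᵥ (oddMatrix K X *ᵥ theta) * normSq K X ^ m) ∈
      (P * ⊤) ^ (1 + (2 + 2 * m)) := by
    rw [pow_add, pow_add, pow_one, pow_mul]
    exact Submodule.mul_mem_mul (hθ k)
      (Submodule.mul_mem_mul (hdot hθ hφ) (Submodule.pow_mem_pow _ (hdot hφ hφ) m))
  rwa [span_range_ι_mul_top_pow_eq_bot _ (by rw [Fintype.card_fin]; omega), Submodule.mem_bot]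
    at hmem

theorem thetaDeriv_theta_dotProduct_mul {X : Matrix (Fin n) (Fin n) V} (hX : Xᵀ = -X) (i : Fin n)
    (y : ThetaAlgebra K V n) :
    thetaDeriv i (theta ⬝ᵥ (oddMatrix K X *ᵥ theta) * y) =
      2 • ((oddMatrix K X *ᵥ theta) i * y) -
        theta ⬝ᵥ (oddMatrix K X *ᵥ theta) * thetaDeriv i y := by
  have hterm (l : Fin n) : theta l * (oddMatrix K X l i * y) = oddMatrix K X i l * theta l * y := by
    rw [oddMatrix_apply_swap hX i l, ← mul_assoc, mul_neg, theta, oddMatrix, map_apply,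
      ι_mul_ι_eq_neg, neg_neg]
  have hφ : ∑ l, theta l * (oddMatrix K X l i * y) = (oddMatrix K X *ᵥ theta) i * y := by
    rw [mulVec, dotProduct, Finset.sum_mul]
    exact Finset.sum_congr rfl fun l _ => hterm l
  rw [dotProduct, Finset.sum_mul, map_sum]
  simp only [mul_assoc, thetaDeriv_theta_mul, thetaDeriv_mulVec_theta_mul, mul_sub,
    Finset.sum_sub_distrib, Finset.sum_ite_eq, Finset.mem_univ, if_true, hφ, Finset.sum_mul]
  rw [two_smul, sub_sub_eq_add_sub]

theorem normSq_pow_eq_zero [IsAddTorsionFree (ThetaAlgebra K V n)]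
    {X : Matrix (Fin n) (Fin n) V} (hX : Xᵀ = -X) {m : ℕ} (hm : n ≤ 2 * m + 2) :
    normSq K X ^ (m + 1) = 0 := by
  have hcomm (i : Fin n) :=
    Subring.mem_center_iff.1 (oddMatrix_mulVec_theta_mem_center (K := K) X i)
  have hflow := sum_mulVec_theta_mul_thetaDeriv_eq_zero hX
    (theta_mul_dotProduct_mul_normSq_pow_eq_zero (K := K) X hm)
  have hderiv : ∑ i, (oddMatrix K X *ᵥ theta) i * thetaDeriv i (normSq K X ^ m) = 0 := by
    cases m with
    | zero => simp [thetaDeriv_one]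
    | succ m =>
      simp only [thetaDeriv_normSq_pow hX, mul_smul_comm, ← mul_assoc]
      rw [← Finset.smul_sum, ← Finset.sum_mul, ← dotProduct,
        mulVec_theta_dotProduct_sq_mulVec_theta_eq_zero hX, zero_mul, smul_zero]
  have hterm (i : Fin n) : (oddMatrix K X *ᵥ theta) i *
      thetaDeriv i (theta ⬝ᵥ (oddMatrix K X *ᵥ theta) * normSq K X ^ m) =
        2 • ((oddMatrix K X *ᵥ theta) i * (oddMatrix K X *ᵥ theta) i * normSq K X ^ m) -
          theta ⬝ᵥ (oddMatrix K X *ᵥ theta) *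
            ((oddMatrix K X *ᵥ theta) i * thetaDeriv i (normSq K X ^ m)) := by
    rw [thetaDeriv_theta_dotProduct_mul hX, mul_sub, mul_smul_comm, ← mul_assoc, ← mul_assoc,
      ← mul_assoc, hcomm i (theta ⬝ᵥ _)]
  simp only [hterm, Finset.sum_sub_distrib] at hflow
  rw [← Finset.mul_sum, hderiv, mul_zero, sub_zero, ← Finset.smul_sum, ← Finset.sum_mul,
    ← dotProduct, ← normSq, ← pow_succ'] at hflow
  exact (smul_eq_zero.1 hflow).resolve_left two_ne_zero

theorem thetaDeriv_sq_mulVec_theta_mul (X : Matrix (Fin n) (Fin n) V) (l i : Fin n)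
    (y : ThetaAlgebra K V n) :
    thetaDeriv l ((oddMatrix K X ^ 2 *ᵥ theta) i * y) =
      (oddMatrix K X ^ 2) i l * y - (oddMatrix K X ^ 2 *ᵥ theta) i * thetaDeriv l y := by
  have hterm (j : Fin n) : thetaDeriv l (oddMatrix K X i j * (oddMatrix K X *ᵥ theta) j * y) =
      oddMatrix K X i j * oddMatrix K X j l * y -
        oddMatrix K X i j * (oddMatrix K X *ᵥ theta) j * thetaDeriv l y := by
    rw [mul_assoc, thetaDeriv_oddMatrix_mul, thetaDeriv_mulVec_theta_mul]
    noncomm_ring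
  rw [sq, ← mulVec_mulVec, mul_apply, mulVec, dotProduct, Finset.sum_mul, map_sum, Finset.sum_mul,
    Finset.sum_mul, ← Finset.sum_sub_distrib]
  exact Finset.sum_congr rfl fun j _ => hterm j

theorem prod_mul_thetaDeriv_prod_mul (X : Matrix (Fin n) (Fin n) V) {q : ℕ}
    {y : ThetaAlgebra K V n}
    (hy : ∀ L : List (Fin n), L.length = q → (L.map (oddMatrix K X ^ 2 *ᵥ theta)).prod * y = 0)
    (l : Fin n) (L₁ L₂ : List (Fin n)) (hL : L₁.length + L₂.length = q + 1) :
    (L₁.map (oddMatrix K X ^ 2 *ᵥ theta)).prod *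
        thetaDeriv l ((L₂.map (oddMatrix K X ^ 2 *ᵥ theta)).prod * y) =
      (-1) ^ L₂.length * (((L₁ ++ L₂).map (oddMatrix K X ^ 2 *ᵥ theta)).prod * thetaDeriv l y) := by
  induction L₂ generalizing L₁ with
  | nil => simp
  | cons i L ih =>
    have hcomm := Subring.mem_center_iff.1 (oddMatrix_sq_mem_center (K := K) X i l)
    have hzero := hy (L₁ ++ L) (by grind)
    have hih := ih (L₁ ++ [i]) (by grind)
    simp only [List.map_append, List.map_cons, List.map_nil, List.prod_append, List.prod_cons,
      List.prod_nil, mul_one, List.length_cons, mul_assoc] at hzero hih ⊢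
    rw [thetaDeriv_sq_mulVec_theta_mul, mul_sub, ← mul_assoc, hcomm, mul_assoc, hzero, mul_zero,
      zero_sub, hih, pow_succ (-1 : ThetaAlgebra K V n), mul_neg_one, neg_mul]

theorem prod_mul_normSq_pow_eq_zero [IsAddTorsionFree (ThetaAlgebra K V n)]
    {X : Matrix (Fin n) (Fin n) V} (hX : Xᵀ = -X) {t s : ℕ}
    (hu : normSq K X ^ (t + s + 1) = 0) (L : List (Fin n)) (hL : L.length = 2 * t + 1) :
    (L.map (oddMatrix K X ^ 2 *ᵥ theta)).prod * normSq K X ^ s = 0 := by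
  have hcancel {s : ℕ} {y : ThetaAlgebra K V n} (h : (2 * (s + 1)) • y = 0) : y = 0 :=
    (smul_eq_zero.1 h).resolve_left (by omega)
  induction t generalizing s L with
  | zero =>
    obtain ⟨i, rfl⟩ := List.length_eq_one_iff.1 hL
    rw [zero_add] at hu
    have h := thetaDeriv_normSq_pow (K := K) hX i s
    rw [hu, map_zero] at h
    simpa using hcancel h.symm
  | succ t ih =>
    rcases L.eq_nil_or_concat' with rfl | ⟨L, l, rfl⟩
    · simp at hL
    rw [List.length_append, List.length_singleton, add_left_inj] at hL
    have hq := ih (s := s + 1) (by rwa [← add_assoc, add_right_comm t s 1])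
    have hzero : (L.map (oddMatrix K X ^ 2 *ᵥ theta)).prod * normSq K X ^ (s + 1) = 0 := by
      obtain ⟨i, L, rfl⟩ := List.exists_cons_of_length_eq_add_one hL
      rw [List.map_cons, List.prod_cons, mul_assoc, hq _ (by grind), mul_zero]
    have h := prod_mul_thetaDeriv_prod_mul X hq l [] L (by grind)
    rw [hzero, map_zero, mul_zero, thetaDeriv_normSq_pow hX, mul_smul_comm, mul_smul_comm] at h
    have hprod := (isUnit_one.neg.pow _).mul_right_eq_zero.1 (hcancel h.symm)
    simpa [mul_assoc] using hprod

theorem prod_sq_mulVec_theta_eq_zero [IsAddTorsionFree (ThetaAlgebra K V n)] (hn : Even n)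
    {X : Matrix (Fin n) (Fin n) V} (hX : Xᵀ = -X) (L : List (Fin n)) (hL : L.length + 1 = n) :
    (L.map (oddMatrix K X ^ 2 *ᵥ theta)).prod = 0 := by
  obtain ⟨m, hm⟩ : ∃ m, n = 2 * m + 2 := ⟨n / 2 - 1, by grind⟩
  have h := prod_mul_normSq_pow_eq_zero (K := K) (t := m) (s := 0) hX
    (normSq_pow_eq_zero hX hm.le) L (by omega)
  rwa [pow_zero, mul_one] at h

theorem oddMatrix_pow_apply_mul_prod_theta_eq_zero [IsAddTorsionFree (ThetaAlgebra K V n)]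
    (hn : Even n) {X : Matrix (Fin n) (Fin n) V} (hX : Xᵀ = -X) {k : ℕ} (hk : 2 * n ≤ k + 2)
    (i j : Fin n) : (oddMatrix K X ^ k) i j * (List.ofFn theta).prod = 0 :=
  pow_apply_mul_prod_eq_zero (oddMatrix_mul_oddMatrix X) (oddMatrix_sq_mem_center X)
    theta_mul_theta (prod_sq_mulVec_theta_eq_zero hn hX) hk i j

theorem oddMatrix_of_eq_sum {k : ℕ} (x : Fin k → Matrix (Fin n) (Fin n) K) :
    oddMatrix K (of fun i j p => x p i j) =
      ∑ p, ι K ((Pi.single p 1 : Fin k → K), (0 : Fin n → K)) •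
        (x p).map (algebraMap K (ThetaAlgebra K (Fin k → K) n)) := by
  ext i j
  have hterm (p : Fin k) :
      ι K ((Pi.single p 1 : Fin k → K), (0 : Fin n → K)) * algebraMap K _ (x p i j) =
        ι K (Pi.single p (x p i j), 0) := by
    rw [← Algebra.commutes, ← Algebra.smul_def, ← map_smul, Prod.smul_mk, ← Pi.single_smul,
      smul_zero, smul_eq_mul, mul_one]
  simp only [Matrix.sum_apply, Matrix.smul_apply, map_apply, smul_eq_mul, hterm, oddMatrix,
    of_apply, ← map_sum]
  rw [← Finset.univ_sum_single (x · i j)]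
  congr 1
  ext p <;> simp [Prod.fst_sum, Prod.snd_sum]

/-- The basis of the module of generators of `ThetaAlgebra K (Fin k → K) n`, with the
`n` generators `θ` last. -/
noncomputable def generatorBasis (K : Type*) [CommRing K] (k n : ℕ) :
    Module.Basis (Fin (k + n)) K ((Fin k → K) × (Fin n → K)) :=
  ((Pi.basisFun K (Fin k)).prod (Pi.basisFun K (Fin n))).reindex finSumFinEquiv

theorem coe_generatorBasis (k n : ℕ) :
    ⇑(generatorBasis K k n) =
      Fin.append (fun p => (Pi.single p 1, 0)) fun i => (0, Pi.single i 1) := by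
  ext1 p
  refine Fin.addCases (fun p => ?_) (fun i => ?_) p <;> simp [generatorBasis]

theorem oddMatrix_of_pow_apply_mul_prod_theta {k : ℕ} (x : Fin k → Matrix (Fin n) (Fin n) K)
    (i j : Fin n) :
    (oddMatrix K (of fun i j p => x p i j) ^ k) i j * (List.ofFn theta).prod =
      standardPolynomial x i j • ιMulti K (k + n) (generatorBasis K k n) := by
  have hθ : (List.ofFn theta).prod =
      ιMulti K n fun i => ((0 : Fin k → K), (Pi.single i 1 : Fin n → K)) :=
    (ιMulti_apply ..).symm
  rw [oddMatrix_of_eq_sum, matrix_sum_ι_smul_pow, Matrix.smul_apply, map_apply, smul_eq_mul,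
    ← Algebra.commutes, ← Algebra.smul_def, smul_mul_assoc, hθ, ιMulti_mul_ιMulti,
    coe_generatorBasis]

end ThetaAlgebra

theorem skew_symmetric_standard_identity_general {K : Type*} [CommRing K] [IsAddTorsionFree K]
    {n k : ℕ} (hn : Even n) (hk : 2 * n ≤ k + 2) (x : Fin k → Matrix (Fin n) (Fin n) K)
    (hx : ∀ p, (x p)ᵀ = -(x p)) : standardPolynomial x = 0 := by
  have : IsAddTorsionFree (ThetaAlgebra K (Fin k → K) n) :=
    isAddTorsionFree_exteriorAlgebra (ThetaAlgebra.generatorBasis K k n)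
  have hX : (of fun i j p => x p i j : Matrix (Fin n) (Fin n) (Fin k → K))ᵀ =
      -of fun i j p => x p i j :=
    ext fun i j => funext fun p => congrFun₂ (hx p) i j
  ext i j
  refine eq_zero_of_smul_ιMulti_basis_eq_zero (ThetaAlgebra.generatorBasis K k n) ?_
  rw [← ThetaAlgebra.oddMatrix_of_pow_apply_mul_prod_theta,
    ThetaAlgebra.oddMatrix_pow_apply_mul_prod_theta_eq_zero hn hX hk]

/-- **Kostant's theorem**: for even `n`, the skew-symmetric `n × n` complex matrices
satisfy the standard identity of degree `2n − 2`. -/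
theorem skew_symmetric_standard_identity (n : ℕ) (hn : Even n)
    (x : Fin (2 * n - 2) → Matrix (Fin n) (Fin n) ℂ)
    (hskew : ∀ i, (x i)ᵀ = -(x i)) :
    standardPolynomial x = 0 :=
  skew_symmetric_standard_identity_general hn (by omega) x hskew
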